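/- Let Λ ⊂ ℝ³ be a bounded open set of finite perimeter, 0 ≤ ρ ≤ 1, and Ω ⊂ Λ a Borel set of finite perimeter whose essential boundary intersects the essential boundary of Λ in an 𝓗²-null set. Then 𝓔_Λ[ρ, Λ∖Ω] = Per(Λ) + 𝓔_Λ[1−ρ, Ω]. -/

import Mathlib

open MeasureTheory Metric Set Filter Bornology
open scoped Topology ENNReal NNReal Pointwise

noncomputable section

/-- Three-dimensional Euclidean space. -/
abbrev E3 : Type := EuclideanSpace ℝ (Fin 3)

/-- The divergence of a vector field on `E3`, defined as the trace of its derivative. -/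
def divg (φ : E3 → E3) (x : E3) : ℝ :=
  LinearMap.trace ℝ E3 (fderiv ℝ φ x : E3 →ₗ[ℝ] E3)

/-- The candidate values `∫_Ω div φ` over `C¹` compactly supported vector fields bounded by one. -/
def perCand (Ω : Set E3) : Set ℝ :=
  {a : ℝ | ∃ φ : E3 → E3, ContDiff ℝ 1 φ ∧ HasCompactSupport φ ∧
      (∀ x, ‖φ x‖ ≤ 1) ∧ a = ∫ x in Ω, divg φ x}

/-- The perimeter of a set, in the sense of geometric measure theory. -/
def per (Ω : Set E3) : ℝ := sSup (perCand Ω)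

/-- A set has finite perimeter if the family of integrals defining the perimeter is
bounded above. -/
def HasFinPer (Ω : Set E3) : Prop := BddAbove (perCand Ω)

/-- The Lebesgue volume of a set as a real number. -/
def vol (Ω : Set E3) : ℝ := (volume Ω).toReal

/-- The liquid drop energy `𝓔_Λ[ρ,Ω]`. -/
def ldEnergy (Λ : Set E3) (ρ : ℝ) (Ω : Set E3) : ℝ :=
  per Ω + (1/2) * ∫ x, ∫ y,
    (Set.indicator Ω (fun _ => (1:ℝ)) x - ρ * Set.indicator Λ (fun _ => (1:ℝ)) x) *
      (Set.indicator Ω (fun _ => (1:ℝ)) y - ρ * Set.indicator Λ (fun _ => (1:ℝ)) y) / ‖x - y‖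

/-- The neutral ground state energy `E_Λ(ρ)`. -/
def EE (Λ : Set E3) (ρ : ℝ) : ℝ :=
  sInf {t : ℝ | ∃ Ω : Set E3, MeasurableSet Ω ∧ Ω ⊆ Λ ∧ HasFinPer Ω ∧
    vol Ω = ρ * vol Λ ∧ t = ldEnergy Λ ρ Ω}

/-- The liquid drop energy `I[Ω]` of an isolated droplet (no background). -/
def II (Ω : Set E3) : ℝ :=
  per Ω + (1/2) * ∫ x in Ω, ∫ y in Ω, 1 / ‖x - y‖

/-- `μ* = inf I[Ω]/|Ω|`. -/
def muStar : ℝ :=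
  sInf {t : ℝ | ∃ Ω : Set E3, MeasurableSet Ω ∧ HasFinPer Ω ∧
    0 < volume Ω ∧ volume Ω < ⊤ ∧ t = II Ω / vol Ω}

/-- A minimizer for the isolated liquid drop problem. -/
def IsMinimizer (Ω : Set E3) : Prop :=
  MeasurableSet Ω ∧ HasFinPer Ω ∧ 0 < volume Ω ∧ volume Ω < ⊤ ∧ II Ω = muStar * vol Ω

/-- The set of masses of minimizers. -/
def minimizerMasses : Set ℝ := {m : ℝ | ∃ Ω : Set E3, IsMinimizer Ω ∧ m = vol Ω}

/-- The largest mass of a minimizer. -/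
def mStar : ℝ := sSup minimizerMasses

/-- The smallest mass of a minimizer. -/
def mStarStar : ℝ := sInf minimizerMasses

/-- `Λ` is an `(r,L)`-Lipschitz open set: near each boundary point it is, in a suitable
orthonormal coordinate system, the epigraph of an `L`-Lipschitz function. -/
def IsLipschitzDomain (r L : ℝ) (Λ : Set E3) : Prop :=
  ∀ x ∈ frontier Λ, ∃ (g : E3 ≃ᵢ E3) (f : ℝ × ℝ → ℝ),
    LipschitzWith L.toNNReal f ∧
    Λ ∩ ball x r = {y ∈ ball x r | f (g y 0, g y 1) < g y 2}

/-- Fisher regularity of the boundary. -/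
def FisherCond (C ℓ : ℝ) (Λ : Set E3) : Prop :=
  ∀ h : ℝ, 0 < h → h ≤ ℓ → (volume (frontier Λ + ball (0:E3) h)).toReal ≤ C * ℓ^2 * h

/-- An admissible sequence of domains for the thermodynamic limit. -/
def IsAdmissibleSeq (r L C : ℝ) (Λs : ℕ → Set E3) (ℓ : ℕ → ℝ) : Prop :=
  Tendsto ℓ atTop atTop ∧
  ∀ n : ℕ, IsOpen (Λs n) ∧ IsBounded (Λs n) ∧ IsLipschitzDomain r L (Λs n) ∧
    ball 0 (ℓ n / C) ⊆ Λs n ∧ Λs n ⊆ ball 0 (ℓ n) ∧ FisherCond C (ℓ n) (Λs n)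

/-- `e` is the thermodynamic limit function of the liquid drop model. -/
def IsThermoLimit (e : ℝ → ℝ) : Prop :=
  ∀ ρ : ℝ, 0 ≤ ρ → ρ ≤ 1 →
    ∀ (r L C : ℝ) (Λs : ℕ → Set E3) (ℓ : ℕ → ℝ), 0 < r → 0 < L → 0 < C →
      IsAdmissibleSeq r L C Λs ℓ →
      Tendsto (fun n => EE (Λs n) ρ / vol (Λs n)) atTop (𝓝 (e ρ))

/-- The domain for the `N`-particle Jellium problem: `N^{1/3} Λ₁` with `Λ₁` the ball of
unit volume centered at the origin. -/
def jelDomain (N : ℕ) : Set E3 :=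
  ball (0:E3) ((N : ℝ) ^ ((1:ℝ)/3) * (3 / (4 * Real.pi)) ^ ((1:ℝ)/3))

/-- The `N`-particle Jellium ground state energy. -/
def jelN (N : ℕ) : ℝ :=
  sInf {t : ℝ | ∃ x : Fin N → E3, (∀ j, x j ∈ jelDomain N) ∧
    t = (∑ j : Fin N, ∑ k : Fin N, if j < k then 1 / ‖x j - x k‖ else 0)
      - (∑ j : Fin N, ∫ y in jelDomain N, 1 / ‖x j - y‖)
      + (1/2) * ∫ x' in jelDomain N, ∫ y in jelDomain N, 1 / ‖x' - y‖}

/-- `eJ` is the Jellium energy per particle in the thermodynamic limit. -/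
def IsJelliumLimit (eJ : ℝ) : Prop :=
  Tendsto (fun N : ℕ => jelN N / (N : ℝ)) atTop (𝓝 eJ)

/-- The grand-canonical liquid drop energy `F_Λ(ρ)`. -/
def FF (Λ : Set E3) (ρ : ℝ) : ℝ :=
  sInf {t : ℝ | ∃ Ω : Set E3, MeasurableSet Ω ∧ Ω ⊆ Λ ∧ HasFinPer Ω ∧
    t = ldEnergy Λ ρ Ω - muStar * vol Ω}

/-- A tetrahedron: the interior of the convex hull of four affinely independent points. -/
def IsTetra (Δ : Set E3) : Prop :=
  ∃ v : Fin 4 → E3, AffineIndependent ℝ v ∧ Δ = interior (convexHull ℝ (Set.range v))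

/-- The open cube `(-L/2, L/2)³`. -/
def cubeL (Lside : ℝ) : Set E3 := {x : E3 | ∀ i, |x i| < Lside / 2}

/-- The grand-canonical Jellium energy of point particles of charge `m` in the domain `S`
with a uniform background of density one. -/
def pointJellium (m : ℝ) (S : Set E3) : ℝ :=
  sInf {t : ℝ | ∃ (n : ℕ) (x : Fin n → E3), (∀ j, x j ∈ S) ∧
    t = (∑ j : Fin n, ∑ k : Fin n, if j < k then m^2 / ‖x j - x k‖ else 0)
      - m * (∑ j : Fin n, ∫ y in S, 1 / ‖x j - y‖)
      + (1/2) * ∫ x' in S, ∫ y in S, 1 / ‖x' - y‖}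

/-- The conclusions of the decomposition theorem for minimizing sequences. -/
def IsDecomp (Ω : ℕ → Set E3) (m : ℝ) (K : ℕ) (Ωs : Fin K → Set E3)
    (a : ℕ → Fin K → E3) (R : ℝ) (φ : ℕ → ℕ) : Prop :=
  StrictMono φ ∧ 0 < R ∧
  (∀ j k : Fin K, j ≠ k → Tendsto (fun n => ‖a n j - a n k‖) atTop atTop) ∧
  (∀ j, IsMinimizer (Ωs j)) ∧
  (∀ j, mStarStar ≤ vol (Ωs j) ∧ vol (Ωs j) ≤ mStar) ∧
  (∀ j, Tendsto
    (fun n => volume (symmDiff ({x : E3 | x + a n j ∈ Ω (φ n)} ∩ ball (0:E3) R) (Ωs j)))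
    atTop (𝓝 0)) ∧
  Tendsto (fun n => volume (Ω (φ n) \ ⋃ j, ball (a n j) R)) atTop (𝓝 0) ∧
  Tendsto (fun n => per (Ω (φ n) \ ⋃ j, ball (a n j) R)) atTop (𝓝 0) ∧
  m = ∑ j, vol (Ωs j) ∧
  (2 ≤ K → ∃ ε : ℕ → ℝ, Tendsto ε atTop (𝓝 0) ∧ ∀ n : ℕ,
    muStar * vol (Ω (φ n)) +
      (∑ j : Fin K, ∑ k : Fin K,
        if j < k then (vol (Ωs j) * vol (Ωs k) + ε n) / ‖a n j - a n k‖ else 0)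
      ≤ II (Ω (φ n)))

instance : MeasurableSpace (Matrix (Fin 3) (Fin 3) ℝ) :=
  (inferInstance : MeasurableSpace (Fin 3 → Fin 3 → ℝ))

/-- The rotation group SO(3), as a set of matrices. -/
def SO3 : Set (Matrix (Fin 3) (Fin 3) ℝ) := {R | R * R.transpose = 1 ∧ R.det = 1}

/-- The action of a matrix on Euclidean space. -/
def rot (R : Matrix (Fin 3) (Fin 3) ℝ) (x : E3) : E3 :=
  (EuclideanSpace.equiv (Fin 3) ℝ).symm (R.mulVec (EuclideanSpace.equiv (Fin 3) ℝ x))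

/-- The image of a set under the rigid motion `x ↦ Rx + τ`. -/
def rigidImage (R : Matrix (Fin 3) (Fin 3) ℝ) (τ : E3) (S : Set E3) : Set E3 :=
  (fun x => rot R x + τ) '' S

/-- `μ` is the normalized Haar measure of SO(3): a probability measure concentrated on SO(3)
which is invariant under left multiplication by rotations. -/
def IsHaarSO3 (μ : Measure (Matrix (Fin 3) (Fin 3) ℝ)) : Prop :=
  IsProbabilityMeasure μ ∧ μ SO3ᶜ = 0 ∧ ∀ S ∈ SO3, Measure.map (fun R => S * R) μ = μ

/-- The cube of the tiling of side length `ε` indexed by `z ∈ ℤ³`. -/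
def cubeZ (ε : ℝ) (z : Fin 3 → ℤ) : Set E3 := {x : E3 | ∀ i, |x i - ε * (z i : ℝ)| < ε / 2}

/-- The distance between two sets. -/
def setDist (s t : Set E3) : ℝ := sInf {d : ℝ | ∃ p ∈ s, ∃ q ∈ t, d = dist p q}

/-- The outer cubic boundary layer of `Λ` at scale `ε`. -/
def outerLayer (Λ : Set E3) (ε : ℝ) : Set E3 :=
  ⋃ z ∈ {z : Fin 3 → ℤ | setDist (cubeZ ε z) (frontier Λ) ≤ ε}, closure (cubeZ ε z \ Λ)

/-- A point of density `d ∈ {0,1}` of a set. -/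
def densityAt (S : Set E3) (x : E3) (d : ℝ≥0∞) : Prop :=
  Tendsto (fun r : ℝ => volume (S ∩ ball x r) / volume (ball x r)) (𝓝[>] 0) (𝓝 d)

/-- The essential boundary of a set: the points where the density is neither `0` nor `1`. -/
def essBdry (S : Set E3) : Set E3 := {x : E3 | ¬ densityAt S x 0 ∧ ¬ densityAt S x 1}

/-- The trace as a linear functional on continuous linear maps. -/
def trL : (E3 →L[ℝ] E3) →ₗ[ℝ] ℝ :=
  (LinearMap.trace ℝ E3) ∘ₗ (ContinuousLinearMap.coeLM ℝ)

lemma trL_continuous : Continuous trL := LinearMap.continuous_of_finiteDimensional _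

lemma divg_eq (φ : E3 → E3) (x : E3) : divg φ x = trL (fderiv ℝ φ x) := rfl

lemma divg_continuous {φ : E3 → E3} (h : ContDiff ℝ 1 φ) : Continuous (divg φ) :=
  trL_continuous.comp (h.continuous_fderiv one_ne_zero)

lemma divg_eq_zero {φ : E3 → E3} {x : E3} (hx : x ∉ tsupport φ) : divg φ x = 0 := by
  rw [divg_eq, fderiv_of_notMem_tsupport ℝ hx, map_zero]

lemma divg_hasCompactSupport {φ : E3 → E3} (h : HasCompactSupport φ) :
    HasCompactSupport (divg φ) :=
  HasCompactSupport.intro h fun _ hx => divg_eq_zero hx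

lemma divg_integrable {φ : E3 → E3} (h : ContDiff ℝ 1 φ) (hc : HasCompactSupport φ) :
    Integrable (divg φ) volume :=
  (divg_continuous h).integrable_of_hasCompactSupport (divg_hasCompactSupport hc)

lemma divg_add {φ ψ : E3 → E3} (hφ : ContDiff ℝ 1 φ) (hψ : ContDiff ℝ 1 ψ) (x : E3) :
    divg (φ + ψ) x = divg φ x + divg ψ x := by
  rw [divg_eq, divg_eq, divg_eq, fderiv_add (hφ.differentiable one_ne_zero x)
    (hψ.differentiable one_ne_zero x), map_add]

lemma divg_neg (φ : E3 → E3) (x : E3) : divg (-φ) x = - divg φ x := by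
  rw [divg_eq, divg_eq, fderiv_neg, map_neg]

lemma divg_smul {η : E3 → ℝ} {φ : E3 → E3} (hη : ContDiff ℝ 1 η) (hφ : ContDiff ℝ 1 φ)
    (x : E3) : divg (fun y => η y • φ y) x = η x * divg φ x + fderiv ℝ η x (φ x) := by
  rw [divg_eq, divg_eq, fderiv_fun_smul (hη.differentiable one_ne_zero x)
    (hφ.differentiable one_ne_zero x), map_add, map_smul, smul_eq_mul]
  congr 1
  exact LinearMap.trace_smulRight (fderiv ℝ η x : E3 →ₗ[ℝ] ℝ) (φ x)

lemma divg_smul_const {η : E3 → ℝ} (hη : ContDiff ℝ 1 η) (v : E3)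
    (x : E3) : divg (fun y => η y • v) x = fderiv ℝ η x v := by
  have := divg_smul (φ := fun _ => v) hη contDiff_const x
  rw [this, divg_eq]; simp

/-- The divergence integral. -/
def flux (E : Set E3) (φ : E3 → E3) : ℝ := ∫ x in E, divg φ x

/-- Admissible test fields supported in `U`. -/
structure Adm (U : Set E3) (φ : E3 → E3) : Prop where
  smooth : ContDiff ℝ 1 φ
  compact : HasCompactSupport φ
  supp : tsupport φ ⊆ U
  bound : ∀ x, ‖φ x‖ ≤ 1

lemma Adm.mono {U W : Set E3} {φ : E3 → E3} (h : Adm U φ) (hUW : U ⊆ W) : Adm W φ :=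
  ⟨h.smooth, h.compact, h.supp.trans hUW, h.bound⟩

lemma Adm.zero (U : Set E3) : Adm U (0 : E3 → E3) :=
  ⟨contDiff_const, HasCompactSupport.zero, by simp [tsupport], by simp⟩

lemma Adm.neg {U : Set E3} {φ : E3 → E3} (h : Adm U φ) : Adm U (-φ) := by
  refine ⟨h.smooth.neg, h.compact.neg, ?_, fun x => by simpa using h.bound x⟩
  have : tsupport (-φ) = tsupport φ := by
    simp [tsupport, Function.support_neg]
  rw [this]; exact h.supp

lemma Adm.int {U : Set E3} {φ : E3 → E3} (h : Adm U φ) : Integrable (divg φ) volume :=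
  divg_integrable h.smooth h.compact

lemma flux_zero (E : Set E3) : flux E 0 = 0 := by
  have : ∀ x, divg 0 x = 0 := fun x => divg_eq_zero (by simp [tsupport])
  simp [flux, this]

lemma flux_neg (E : Set E3) (φ : E3 → E3) : flux E (-φ) = - flux E φ := by
  simp only [flux, divg_neg, integral_neg]

lemma flux_add (E : Set E3) {φ ψ : E3 → E3} (h1 : ContDiff ℝ 1 φ) (h2 : HasCompactSupport φ)
    (h3 : ContDiff ℝ 1 ψ) (h4 : HasCompactSupport ψ) :
    flux E (φ + ψ) = flux E φ + flux E ψ := by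
  simp only [flux, divg_add h1 h3]
  exact integral_add (divg_integrable h1 h2).integrableOn (divg_integrable h3 h4).integrableOn

/-- Disjointly supported admissible fields can be added. -/
lemma Adm.add_disjoint {U W : Set E3} {φ ψ : E3 → E3} (h : Adm U φ) (k : Adm W ψ)
    (hd : Disjoint U W) : Adm (U ∪ W) (φ + ψ) := by
  refine ⟨h.smooth.add k.smooth, h.compact.add k.compact, ?_, ?_⟩
  · exact (tsupport_add φ ψ).trans (union_subset_union h.supp k.supp)
  · intro x
    by_cases hx : x ∈ U
    · have : ψ x = 0 := by
        by_contra h0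
        exact hd.le_bot ⟨hx, k.supp (subset_tsupport _ h0)⟩
      simpa [this] using h.bound x
    · have : φ x = 0 := by
        by_contra h0
        exact hx (h.supp (subset_tsupport _ h0))
      simpa [this] using k.bound x

/-- The divergence theorem for compactly supported fields. -/
lemma flux_univ {φ : E3 → E3} (h : ContDiff ℝ 1 φ) (hc : HasCompactSupport φ) :
    flux univ φ = 0 := by
  have hd : Differentiable ℝ φ := h.differentiable one_ne_zero
  have key : ∀ x, divg φ x = ∑ i : Fin 3, fderiv ℝ (fun y => φ y i) x (EuclideanSpace.single i 1) := by
    intro x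
    rw [divg, LinearMap.trace_eq_sum_inner _ (EuclideanSpace.basisFun (Fin 3) ℝ)]
    refine Finset.sum_congr rfl fun i _ => ?_
    have : HasFDerivAt (fun y => φ y i) ((EuclideanSpace.proj i : E3 →L[ℝ] ℝ).comp (fderiv ℝ φ x)) x :=
      (EuclideanSpace.proj i : E3 →L[ℝ] ℝ).hasFDerivAt.comp x (hd x).hasFDerivAt
    rw [this.fderiv]
    simp [EuclideanSpace.inner_single_left]
  have hsm : ∀ i, ContDiff ℝ 1 (fun y => φ y i) := fun i =>
    (EuclideanSpace.proj i : E3 →L[ℝ] ℝ).contDiff.comp h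
  have hcs : ∀ i, HasCompactSupport (fun y => φ y i) := fun i =>
    hc.comp_left (g := fun v : E3 => v i) rfl
  have hIntg : ∀ i, Integrable (fun x => fderiv ℝ (fun y => φ y i) x (EuclideanSpace.single i 1)) := by
    intro i
    refine Continuous.integrable_of_hasCompactSupport ?_ ?_
    · exact ((hsm i).continuous_fderiv one_ne_zero).clm_apply continuous_const
    · exact (hcs i).fderiv_apply (𝕜 := ℝ) _
  simp only [flux, setIntegral_univ, key]
  rw [integral_finsetSum _ fun i _ => hIntg i]
  refine Finset.sum_eq_zero fun i _ => ?_
  have := integral_mul_fderiv_eq_neg_fderiv_mul_of_integrable (μ := (volume : Measure E3))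
    (f := fun _ => (1:ℝ)) (g := fun y => φ y i) (v := EuclideanSpace.single i (1:ℝ))
    (by simp) (by simpa using hIntg i)
    (by simpa using (hsm i).continuous.integrable_of_hasCompactSupport (hcs i))
    (by intro x; fun_prop) (fun x _ => (hsm i).differentiable one_ne_zero x)
  simpa using this

lemma flux_diff {A B : Set E3} {φ : E3 → E3} (h : ContDiff ℝ 1 φ) (hc : HasCompactSupport φ)
    (hB : MeasurableSet B) (hBA : B ⊆ A) : flux (A \ B) φ = flux A φ - flux B φ :=
  setIntegral_sdiff hB (divg_integrable h hc).integrableOn hBA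

lemma flux_compl {A : Set E3} {φ : E3 → E3} (h : ContDiff ℝ 1 φ) (hc : HasCompactSupport φ)
    (hA : MeasurableSet A) : flux Aᶜ φ = - flux A φ := by
  rw [compl_eq_univ_sdiff, flux_diff h hc hA (subset_univ _), flux_univ h hc, zero_sub]

lemma mem_perCand {E : Set E3} {a : ℝ} : a ∈ perCand E ↔ ∃ φ, Adm univ φ ∧ a = flux E φ := by
  constructor
  · rintro ⟨φ, h1, h2, h3, h4⟩
    exact ⟨φ, ⟨h1, h2, subset_univ _, h3⟩, h4⟩
  · rintro ⟨φ, h, h4⟩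
    exact ⟨φ, h.smooth, h.compact, h.bound, h4⟩

lemma flux_le_per {E : Set E3} (hE : HasFinPer E) {U : Set E3} {φ : E3 → E3} (h : Adm U φ) :
    flux E φ ≤ per E :=
  le_csSup hE (mem_perCand.2 ⟨φ, h.mono (subset_univ _), rfl⟩)

lemma per_nonneg {E : Set E3} (hE : HasFinPer E) : 0 ≤ per E := by
  have := flux_le_per hE (Adm.zero univ)
  rwa [flux_zero] at this

lemma perCand_compl {E : Set E3} (hE : MeasurableSet E) : perCand Eᶜ = perCand E := by
  ext a
  rw [mem_perCand, mem_perCand]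
  constructor
  · rintro ⟨φ, h, rfl⟩
    exact ⟨-φ, h.neg, by rw [flux_compl h.smooth h.compact hE, flux_neg]⟩
  · rintro ⟨φ, h, rfl⟩
    exact ⟨-φ, h.neg, by rw [flux_compl h.neg.smooth h.neg.compact hE, flux_neg, neg_neg]⟩

/-- Smooth cutoff functions with gradient bounds. -/
lemma exists_cutoff (K : Set E3) (hK : IsCompact K) {r : ℝ} (hr : 0 < r) :
    ∃ η : E3 → ℝ, ContDiff ℝ 1 η ∧ HasCompactSupport η ∧ (∀ x, 0 ≤ η x ∧ η x ≤ 1) ∧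
      (∀ x ∈ thickening (r / 4) K, η x = 1) ∧ tsupport η ⊆ thickening r K ∧
      (∀ x, ‖fderiv ℝ η x‖ ≤ 4 / r) := by
  rcases K.eq_empty_or_nonempty with rfl | hne
  · refine ⟨0, contDiff_const, HasCompactSupport.zero, by simp, by simp, by simp [tsupport], ?_⟩
    intro x
    rw [fderiv_zero]
    simp; positivity
  let f : E3 → ℝ := fun x => max 0 (min 1 (5 / 2 - 4 / r * infDist x K))
  have hflip : LipschitzWith (4 / r).toNNReal f := by
    have h1 : LipschitzWith (4 / r).toNNReal (fun x : E3 => 5 / 2 - 4 / r * infDist x K) := by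
      refine LipschitzWith.of_dist_le_mul fun x y => ?_
      have := (lipschitz_infDist_pt K).dist_le_mul x y
      rw [Real.dist_eq] at *
      rw [Real.coe_toNNReal _ (by positivity)]
      have e : 5 / 2 - 4 / r * infDist x K - (5 / 2 - 4 / r * infDist y K)
        = - (4 / r * (infDist x K - infDist y K)) := by ring
      rw [e, abs_neg, abs_mul, abs_of_pos (by positivity : 0 < 4 / r)]
      gcongr
      simpa using this
    exact (h1.const_min 1).const_max 0
  have hfc : Continuous f := hflip.continuous
  have hf0 : ∀ x, 0 ≤ f x := fun x => le_max_left _ _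
  have hf1 : ∀ x, f x ≤ 1 := fun x => max_le zero_le_one (min_le_left _ _)
  let b : ContDiffBump (0 : E3) := ⟨r / 16, r / 8, by positivity, by linarith⟩
  let η : E3 → ℝ := convolution (b.normed volume) f (ContinuousLinearMap.lsmul ℝ ℝ) volume
  have hsm : ContDiff ℝ 1 η :=
    b.hasCompactSupport_normed.contDiff_convolution_left _ b.contDiff_normed
      hfc.locallyIntegrable
  have hηdef : ∀ x, η x = ∫ t, b.normed volume t * f (x - t) := fun x => rfl
  have hIntg : ∀ x, Integrable (fun t => b.normed volume t * f (x - t)) := by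
    intro x
    refine Continuous.integrable_of_hasCompactSupport ?_ ?_
    · exact b.continuous_normed.mul (hfc.comp (by fun_prop))
    · exact b.hasCompactSupport_normed.mul_right
  have hloc : ∀ x c, (∀ y ∈ ball x (r / 8), f y = c) → η x = c := by
    intro x c h
    have hx := h x (mem_ball_self (by positivity))
    have := b.normed_convolution_eq_right (μ := volume) (g := f) (x₀ := x)
      (fun y hy => by rw [h y hy, hx])
    rw [← hx]; exact this
  have hone : ∀ x ∈ thickening (r / 4) K, η x = 1 := by
    intro x hx
    apply hloc
    intro y hy
    rw [mem_thickening_iff_infDist_lt hne] at hx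
    have : infDist y K ≤ infDist x K + dist y x := infDist_le_infDist_add_dist
    rw [mem_ball] at hy
    have h3 : 4 / r * infDist y K ≤ 4 / r * (3 / 8 * r) := by gcongr; linarith
    have h4 : 4 / r * (3 / 8 * r) = 3 / 2 := by field_simp; norm_num
    simp only [f]
    rw [min_eq_left (by linarith), max_eq_right (by norm_num)]
  have hzero : ∀ x, 3 / 4 * r ≤ infDist x K → η x = 0 := by
    intro x hx
    apply hloc
    intro y hy
    have : infDist x K ≤ infDist y K + dist x y := infDist_le_infDist_add_dist
    rw [mem_ball, dist_comm] at hy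
    have h3 : 4 / r * (5 / 8 * r) ≤ 4 / r * infDist y K := by gcongr; linarith
    have h4 : 4 / r * (5 / 8 * r) = 5 / 2 := by field_simp; norm_num
    simp only [f]
    rw [max_eq_left]
    exact (min_le_right _ _).trans (by linarith)
  have hts : tsupport η ⊆ cthickening (3 / 4 * r) K := by
    refine closure_minimal ?_ isClosed_cthickening
    intro x hx
    by_contra h
    apply hx
    apply hzero
    by_contra h'
    push Not at h'
    exact h (thickening_subset_cthickening _ _ ((mem_thickening_iff_infDist_lt hne).2 h'))
  refine ⟨η, hsm, ?_, ?_, hone, ?_, ?_⟩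
  · exact hK.cthickening.of_isClosed_subset (isClosed_tsupport _) hts
  · intro x
    constructor
    · rw [hηdef]
      exact integral_nonneg fun t => mul_nonneg (b.nonneg_normed t) (hf0 _)
    · rw [hηdef, ← b.integral_normed (μ := volume)]
      refine integral_mono (hIntg x) b.integrable_normed fun t => ?_
      exact mul_le_of_le_one_right (b.nonneg_normed t) (hf1 _)
  · exact hts.trans (cthickening_subset_thickening' hr (by linarith) K)
  · intro x
    have hlip : LipschitzWith (4 / r).toNNReal η := by
      refine LipschitzWith.of_dist_le_mul fun x y => ?_
      rw [Real.dist_eq, hηdef, hηdef, ← integral_sub (hIntg x) (hIntg y)]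
      rw [← Real.norm_eq_abs]
      have : ∀ t, ‖b.normed volume t * f (x - t) - b.normed volume t * f (y - t)‖
          ≤ b.normed volume t * ((4 / r).toNNReal * dist x y) := by
        intro t
        rw [← mul_sub, norm_mul, Real.norm_of_nonneg (b.nonneg_normed t)]
        refine mul_le_mul_of_nonneg_left ?_ (b.nonneg_normed t)
        have := hflip.dist_le_mul (x - t) (y - t)
        rwa [dist_sub_right, dist_eq_norm] at this
      refine (norm_integral_le_of_norm_le (b.integrable_normed.mul_const _)
        (Eventually.of_forall this)).trans ?_
      rw [integral_mul_const, b.integral_normed, one_mul]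
    have := norm_fderiv_le_of_lipschitz ℝ hlip (x₀ := x)
    rwa [Real.coe_toNNReal _ (by positivity)] at this


/-- The variation of `1_E` in `U`. -/
def V (E U : Set E3) : ℝ≥0∞ := ⨆ φ, ⨆ (_ : Adm U φ), ENNReal.ofReal (flux E φ)

lemma le_V {E U : Set E3} {φ : E3 → E3} (h : Adm U φ) : ENNReal.ofReal (flux E φ) ≤ V E U :=
  le_iSup₂ (f := fun φ (_ : Adm U φ) => ENNReal.ofReal (flux E φ)) φ h

lemma V_mono {E U W : Set E3} (h : U ⊆ W) : V E U ≤ V E W :=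
  iSup₂_le fun _ hφ => le_V (hφ.mono h)

lemma V_le_per {E : Set E3} (hE : HasFinPer E) (U : Set E3) : V E U ≤ ENNReal.ofReal (per E) :=
  iSup₂_le fun _ hφ => ENNReal.ofReal_le_ofReal (flux_le_per hE hφ)

lemma V_ne_top {E : Set E3} (hE : HasFinPer E) (U : Set E3) : V E U ≠ ∞ :=
  ((V_le_per hE U).trans_lt ENNReal.ofReal_lt_top).ne

lemma V_univ {E : Set E3} (hE : HasFinPer E) : V E univ = ENNReal.ofReal (per E) := by
  refine le_antisymm (V_le_per hE _) ?_
  refine ENNReal.ofReal_le_of_le_toReal ?_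
  refine csSup_le ⟨0, mem_perCand.2 ⟨0, Adm.zero _, (flux_zero _).symm⟩⟩ ?_
  intro a ha
  obtain ⟨φ, h, rfl⟩ := mem_perCand.1 ha
  exact (ENNReal.ofReal_le_iff_le_toReal (V_ne_top hE _)).1 (le_V h)

lemma V_add_le {E U W : Set E3} (hd : Disjoint U W) : V E U + V E W ≤ V E (U ∪ W) := by
  unfold V
  refine ENNReal.biSup_add_biSup_le' ⟨0, Adm.zero _⟩ ⟨0, Adm.zero _⟩ ?_
  intro φ hφ ψ hψ
  rcases le_or_gt (flux E φ) 0 with h1 | h1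
  · rw [ENNReal.ofReal_of_nonpos h1, zero_add]
    exact le_V (hψ.mono subset_union_right)
  rcases le_or_gt (flux E ψ) 0 with h2 | h2
  · rw [ENNReal.ofReal_of_nonpos h2, add_zero]
    exact le_V (hφ.mono subset_union_left)
  rw [← ENNReal.ofReal_add h1.le h2.le, ← flux_add E hφ.smooth hφ.compact hψ.smooth hψ.compact]
  exact le_V (hφ.add_disjoint hψ hd)

lemma hcs_smul {φ : E3 → E3} (h : HasCompactSupport φ) (η : E3 → ℝ) :
    HasCompactSupport (fun x => η x • φ x) :=
  HasCompactSupport.intro h fun x hx => by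
    rw [image_eq_zero_of_notMem_tsupport hx, smul_zero]

lemma cd_smul {φ : E3 → E3} (h : ContDiff ℝ 1 φ) {η : E3 → ℝ} (hη : ContDiff ℝ 1 η) :
    ContDiff ℝ 1 (fun x => η x • φ x) := hη.smul h

lemma Adm.mul {U C : Set E3} {φ : E3 → E3} (h : Adm U φ) {η : E3 → ℝ} (hη : ContDiff ℝ 1 η)
    (h01 : ∀ x, 0 ≤ η x ∧ η x ≤ 1) (hC : IsClosed C) (hz : ∀ x ∉ C, η x = 0) :
    Adm (tsupport φ ∩ C) (fun x => η x • φ x) := by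
  refine ⟨cd_smul h.smooth hη, hcs_smul h.compact η, ?_, ?_⟩
  · refine closure_minimal ?_ ((isClosed_tsupport _).inter hC)
    intro x hx
    constructor
    · refine subset_tsupport _ fun h0 => hx ?_
      simp [h0]
    · by_contra h0
      exact hx (by simp [hz x h0])
  · intro x
    rw [norm_smul, Real.norm_of_nonneg (h01 x).1]
    exact mul_le_one₀ (h01 x).2 (norm_nonneg _) (h.bound x)

lemma flux_split {E U : Set E3} {φ : E3 → E3} (h : Adm U φ) {η : E3 → ℝ} (hη : ContDiff ℝ 1 η) :
    flux E φ = flux E (fun x => η x • φ x) + flux E (fun x => (1 - η x) • φ x) := by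
  rw [← flux_add E (cd_smul h.smooth hη) (hcs_smul h.compact η)
    (cd_smul h.smooth (contDiff_const.sub hη)) (hcs_smul h.compact (fun x => 1 - η x))]
  congr 1
  ext1 x
  simp [sub_smul]

lemma V_union_le {E U W : Set E3} (hU : IsOpen U) (hW : IsOpen W) :
    V E (U ∪ W) ≤ V E U + V E W := by
  refine iSup₂_le fun φ hφ => ?_
  have hK : IsCompact (tsupport φ \ W) := hφ.compact.isCompact.diff hW
  have hKU : tsupport φ \ W ⊆ U := fun x hx => (hφ.supp hx.1).resolve_right hx.2
  obtain ⟨r, hr, hrU⟩ := hK.exists_thickening_subset_open hU hKU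
  obtain ⟨η, h1, h2, h3, h4, h5, -⟩ := exists_cutoff _ hK hr
  rw [flux_split hφ h1]
  refine ENNReal.ofReal_add_le.trans (add_le_add ?_ ?_)
  · refine le_V ((hφ.mul h1 h3 (isClosed_tsupport η) fun x hx => ?_).mono ?_)
    · exact image_eq_zero_of_notMem_tsupport hx
    · exact inter_subset_right.trans (h5.trans hrU)
  · refine le_V ((hφ.mul (contDiff_const.sub h1) (fun x => ?_)
      (isOpen_thickening (δ := r / 4) (E := tsupport φ \ W)).isClosed_compl fun x hx => ?_).mono ?_)
    · have := h3 x; constructor <;> linarith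
    · rw [notMem_compl_iff] at hx
      rw [h4 x hx, sub_self]
    · rintro x ⟨hx1, hx2⟩
      by_contra hxW
      exact hx2 (self_subset_thickening (by positivity) _ ⟨hx1, hxW⟩)

/-- The variation on compact sets. -/
def lam (E K : Set E3) : ℝ≥0∞ := ⨅ U, ⨅ (_ : IsOpen U ∧ K ⊆ U), V E U

lemma lam_le {E K U : Set E3} (hU : IsOpen U) (h : K ⊆ U) : lam E K ≤ V E U :=
  iInf₂_le (f := fun U (_ : IsOpen U ∧ K ⊆ U) => V E U) U ⟨hU, h⟩

lemma lam_ne_top {E : Set E3} (hE : HasFinPer E) (K : Set E3) : lam E K ≠ ∞ :=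
  ((lam_le isOpen_univ (subset_univ K)).trans_lt (V_ne_top hE _).lt_top).ne

lemma lam_mono {E K L : Set E3} (h : K ⊆ L) : lam E K ≤ lam E L :=
  le_iInf₂ fun _ hU => lam_le hU.1 (h.trans hU.2)

lemma lam_union_le {E : Set E3} (K L : Set E3) : lam E (K ∪ L) ≤ lam E K + lam E L := by
  conv_rhs => unfold lam
  refine ENNReal.le_iInf₂_add_iInf₂ ?_
  intro U hU W hW
  exact (lam_le (hU.1.union hW.1) (union_subset_union hU.2 hW.2)).trans (V_union_le hU.1 hW.1)

lemma lam_add_le {E K L : Set E3} (hK : IsCompact K) (hL : IsCompact L) (hd : Disjoint K L) :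
    lam E K + lam E L ≤ lam E (K ∪ L) := by
  refine le_iInf₂ fun U hU => ?_
  obtain ⟨A, B, hA, hB, hKA, hLB, hAB⟩ := SeparatedNhds.of_isCompact_isCompact hK hL hd
  calc lam E K + lam E L ≤ V E (A ∩ U) + V E (B ∩ U) :=
        add_le_add (lam_le (hA.inter hU.1) (subset_inter hKA (subset_union_left.trans hU.2)))
          (lam_le (hB.inter hU.1) (subset_inter hLB (subset_union_right.trans hU.2)))
    _ ≤ V E ((A ∩ U) ∪ (B ∩ U)) := V_add_le (hAB.mono inter_subset_left inter_subset_left)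
    _ ≤ V E U := V_mono (union_subset inter_subset_right inter_subset_right)

/-- The perimeter content. -/
def perContent (E : Set E3) (hE : HasFinPer E) : Content E3 where
  toFun K := (lam E K).toNNReal
  mono' K L h := ENNReal.toNNReal_mono (lam_ne_top hE _) (lam_mono h)
  sup_disjoint' K L hd _ _ := by
    rw [← ENNReal.toNNReal_add (lam_ne_top hE _) (lam_ne_top hE _)]
    congr 1
    exact le_antisymm (lam_union_le _ _) (lam_add_le K.isCompact L.isCompact hd)
  sup_le' K L := by
    rw [← ENNReal.toNNReal_add (lam_ne_top hE _) (lam_ne_top hE _)]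
    refine ENNReal.toNNReal_mono ?_ (lam_union_le _ _)
    exact ENNReal.add_ne_top.2 ⟨lam_ne_top hE _, lam_ne_top hE _⟩

/-- The perimeter measure. -/
def perM (E : Set E3) (hE : HasFinPer E) : Measure E3 := (perContent E hE).measure

lemma perContent_apply (E : Set E3) (hE : HasFinPer E) (K : TopologicalSpace.Compacts E3) :
    perContent E hE K = lam E K :=
  ENNReal.coe_toNNReal (lam_ne_top hE _)

lemma perM_open {E : Set E3} (hE : HasFinPer E) {U : Set E3} (hU : IsOpen U) :
    perM E hE U = V E U := by
  rw [perM, Content.measure_apply _ hU.measurableSet, Content.outerMeasure_of_isOpen _ _ hU]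
  refine le_antisymm ?_ ?_
  · refine iSup₂_le fun K hK => ?_
    rw [perContent_apply]
    exact lam_le hU hK
  · refine iSup₂_le fun φ hφ => ?_
    refine le_trans ?_ (Content.le_innerContent _ ⟨tsupport φ, hφ.compact⟩ ⟨U, hU⟩ hφ.supp)
    rw [perContent_apply]
    refine le_iInf₂ fun W hW => le_V ⟨hφ.smooth, hφ.compact, hW.2, hφ.bound⟩

lemma perM_univ {E : Set E3} (hE : HasFinPer E) : perM E hE univ = ENNReal.ofReal (per E) := by
  rw [perM_open hE isOpen_univ, V_univ hE]

instance perM_finite {E : Set E3} (hE : HasFinPer E) : IsFiniteMeasure (perM E hE) :=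
  ⟨by rw [perM_univ]; exact ENNReal.ofReal_lt_top⟩

/-- The removal lemma: a compact set with good cutoffs has small perimeter measure. -/
lemma perM_le_of_cutoff {E : Set E3} (hE : HasFinPer E) {K : Set E3} (hK : IsCompact K)
    {c : ℝ} (h : ∀ ε > 0, ∃ η : E3 → ℝ, ContDiff ℝ 1 η ∧ HasCompactSupport η ∧
      (∀ x, 0 ≤ η x ∧ η x ≤ 1) ∧ (∃ W, IsOpen W ∧ K ⊆ W ∧ ∀ x ∈ W, η x = 1) ∧
      ∫ x in E, η x ≤ ε ∧ ∫ x in E, ‖fderiv ℝ η x‖ ≤ c + ε) :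
    perM E hE K ≤ ENNReal.ofReal c := by
  have key : V E univ ≤ V E Kᶜ + ENNReal.ofReal c := by
    refine iSup₂_le fun φ hφ => ?_
    obtain ⟨C, hC⟩ := (divg_continuous hφ.smooth).bounded_above_of_compact_support
      (divg_hasCompactSupport hφ.compact)
    have hC0 : 0 ≤ C := (norm_nonneg _).trans (hC 0)
    refine ENNReal.le_of_forall_pos_le_add fun δ hδ _ => ?_
    obtain ⟨η, h1, h2, h3, ⟨W, hW, hKW, hW1⟩, h5, h6⟩ := h (δ / (C + 1)) (by positivity)
    have e1 : flux E (fun x => η x • φ x) ≤ c + δ := by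
      have i1 : Integrable (fun x => C * η x) :=
        (h1.continuous.integrable_of_hasCompactSupport h2).const_mul C
      have i2 : Integrable (fun x => ‖fderiv ℝ η x‖) :=
        ((h1.continuous_fderiv one_ne_zero).integrable_of_hasCompactSupport
          (h2.fderiv (𝕜 := ℝ))).norm
      have : flux E (fun x => η x • φ x) ≤ ∫ x in E, (C * η x + ‖fderiv ℝ η x‖) := by
        refine integral_mono
          (divg_integrable (cd_smul hφ.smooth h1) (hcs_smul hφ.compact η)).integrableOn
          (i1.add i2).integrableOn fun x => ?_
        show divg (fun x => η x • φ x) x ≤ _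
        rw [divg_smul h1 hφ.smooth, mul_comm C]
        refine add_le_add (mul_le_mul_of_nonneg_left ((le_abs_self _).trans (hC x)) (h3 x).1) ?_
        refine (le_abs_self _).trans ((fderiv ℝ η x).le_opNorm (φ x) |>.trans ?_)
        exact mul_le_of_le_one_right (norm_nonneg _) (hφ.bound x)
      rw [integral_add i1.integrableOn i2.integrableOn, integral_const_mul] at this
      have h7 : C * ∫ x in E, η x ≤ C * (δ / (C + 1)) := mul_le_mul_of_nonneg_left h5 hC0
      have h8 : C * (δ / (C + 1)) + δ / (C + 1) = δ := by field_simp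
      linarith
    rw [flux_split hφ h1, add_comm]
    refine ENNReal.ofReal_add_le.trans ?_
    rw [add_assoc]
    refine add_le_add ?_ ?_
    · refine le_V ((hφ.mul (contDiff_const.sub h1) (fun x => ?_) hW.isClosed_compl
        fun x hx => ?_).mono ?_)
      · have := h3 x; constructor <;> linarith
      · rw [notMem_compl_iff] at hx
        rw [hW1 x hx, sub_self]
      · exact inter_subset_right.trans (compl_subset_compl.2 hKW)
    · refine (ENNReal.ofReal_le_ofReal e1).trans (ENNReal.ofReal_add_le.trans ?_)
      simp
  rw [← perM_open hE isOpen_univ, ← perM_open hE hK.isClosed.isOpen_compl,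
    ← measure_add_measure_compl hK.measurableSet, add_comm] at key
  exact (ENNReal.add_le_add_iff_left (measure_ne_top _ _)).1 key


/-- Volume of the unit ball. -/
def ballVol : ℝ := volume.real (ball (0 : E3) 1)

lemma vol_ball (x : E3) {r : ℝ} (hr : 0 < r) : volume.real (ball x r) = r ^ 3 * ballVol := by
  rw [ballVol, measureReal_def, measureReal_def, Measure.addHaar_ball_of_pos _ _ hr,
    ENNReal.toReal_mul, ENNReal.toReal_ofReal (by positivity)]
  simp

lemma ballVol_pos : 0 < ballVol :=
  ENNReal.toReal_pos (measure_ball_pos _ _ one_pos).ne' measure_ball_lt_top.ne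

lemma integral_le_of_supp {f : E3 → ℝ} {A : Set E3} {c : ℝ} (hA : MeasurableSet A)
    (hAf : volume A ≠ ∞) (hf : Integrable f) (h0 : ∀ x ∉ A, f x ≤ 0) (h1 : ∀ x, f x ≤ c) :
    ∫ x, f x ≤ c * volume.real A := by
  have : ∫ x, f x ≤ ∫ x, A.indicator (fun _ => c) x := by
    refine integral_mono hf ((integrable_indicator_iff hA).2 (integrableOn_const hAf)) fun x => ?_
    by_cases hx : x ∈ A
    · simpa [hx] using h1 x
    · simpa [hx] using h0 x hx
  rw [integral_indicator hA, setIntegral_const, smul_eq_mul, mul_comm] at this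
  exact this

lemma integrable_norm_fderiv {η : E3 → ℝ} (h1 : ContDiff ℝ 1 η) (h2 : HasCompactSupport η) :
    Integrable (fun x => ‖fderiv ℝ η x‖) :=
  ((h1.continuous_fderiv one_ne_zero).integrable_of_hasCompactSupport (h2.fderiv (𝕜 := ℝ))).norm

/-- Cutoff for a ball with integral bounds. -/
lemma exists_ball_cutoff (x : E3) {r : ℝ} (hr : 0 < r) :
    ∃ η : E3 → ℝ, ContDiff ℝ 1 η ∧ HasCompactSupport η ∧ (∀ x, 0 ≤ η x ∧ η x ≤ 1) ∧
      (∀ y ∈ ball x r, η y = 1) ∧ ∫ y, η y ≤ 8 * ballVol * r ^ 3 ∧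
      ∫ y, ‖fderiv ℝ η y‖ ≤ 32 * ballVol * r ^ 2 := by
  obtain ⟨η, h1, h2, h3, h4, h5, h6⟩ := exists_cutoff _ (isCompact_closedBall x r) hr
  have hsub : tsupport η ⊆ ball x (2 * r) := by
    refine h5.trans ?_
    rw [thickening_closedBall hr hr.le, two_mul]
  refine ⟨η, h1, h2, h3, fun y hy => h4 y ?_, ?_, ?_⟩
  · exact self_subset_thickening (by positivity) _ (ball_subset_closedBall hy)
  · have := integral_le_of_supp (c := 1) measurableSet_ball (measure_ball_lt_top (x := x) (r := 2 * r)).ne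
      (h1.continuous.integrable_of_hasCompactSupport h2)
      (fun y hy => (image_eq_zero_of_notMem_tsupport fun h => hy (hsub h)).le) fun y => (h3 y).2
    rw [vol_ball _ (by positivity)] at this
    linarith
  · have := integral_le_of_supp (c := 4 / r) measurableSet_ball
      (measure_ball_lt_top (x := x) (r := 2 * r)).ne
      (integrable_norm_fderiv h1 h2)
      (fun y hy => by rw [fderiv_of_notMem_tsupport ℝ fun h => hy (hsub h), norm_zero]) h6
    rw [vol_ball _ (by positivity)] at this
    refine this.trans (le_of_eq ?_)
    field_simp
    ring

lemma exists_balls_cutoff (x : ℕ → E3) (r : ℕ → ℝ) (hr : ∀ i, 0 < r i) (s : Finset ℕ) :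
    ∃ η : E3 → ℝ, ContDiff ℝ 1 η ∧ HasCompactSupport η ∧ (∀ x, 0 ≤ η x ∧ η x ≤ 1) ∧
      (∀ i ∈ s, ∀ y ∈ ball (x i) (r i), η y = 1) ∧ ∫ y, η y ≤ ∑ i ∈ s, 8 * ballVol * r i ^ 3 ∧
      ∫ y, ‖fderiv ℝ η y‖ ≤ ∑ i ∈ s, 32 * ballVol * r i ^ 2 := by
  induction s using Finset.induction_on with
  | empty =>
    refine ⟨0, contDiff_const, HasCompactSupport.zero, by simp, by simp, by simp, ?_⟩
    simp
  | insert i s hi ih =>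
    obtain ⟨η, h1, h2, h3, h4, h5, h6⟩ := ih
    obtain ⟨θ, k1, k2, k3, k4, k5, k6⟩ := exists_ball_cutoff (x i) (hr i)
    have iη := h1.continuous.integrable_of_hasCompactSupport h2 (μ := volume)
    have iθ := k1.continuous.integrable_of_hasCompactSupport k2 (μ := volume)
    have c1 : ContDiff ℝ 1 (fun y => η y + (1 - η y) * θ y) :=
      h1.add ((contDiff_const.sub h1).mul k1)
    have c2 : HasCompactSupport (fun y => η y + (1 - η y) * θ y) := by
      have : HasCompactSupport (fun y => (1 - η y) * θ y) :=
        HasCompactSupport.intro k2 fun y hy => by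
          rw [image_eq_zero_of_notMem_tsupport hy, mul_zero]
      exact h2.add this
    refine ⟨fun y => η y + (1 - η y) * θ y, c1, c2, ?_, ?_, ?_, ?_⟩
    · intro y
      have a := h3 y
      have b := k3 y
      constructor <;> nlinarith
    · intro j hj y hy
      rcases Finset.mem_insert.1 hj with rfl | hj
      · simp [k4 y hy]
      · simp [h4 j hj y hy]
    · rw [Finset.sum_insert hi, add_comm]
      refine le_trans ?_ (add_le_add h5 k5)
      rw [← integral_add iη iθ]
      refine integral_mono (c1.continuous.integrable_of_hasCompactSupport c2) (iη.add iθ) fun y => ?_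
      have a := h3 y
      have b := k3 y
      simp only [Pi.add_apply]
      nlinarith
    · rw [Finset.sum_insert hi, add_comm]
      refine le_trans ?_ (add_le_add h6 k6)
      rw [← integral_add (integrable_norm_fderiv h1 h2) (integrable_norm_fderiv k1 k2)]
      refine integral_mono (integrable_norm_fderiv c1 c2)
        ((integrable_norm_fderiv h1 h2).add (integrable_norm_fderiv k1 k2)) fun y => ?_
      have d1 := (h1.differentiable one_ne_zero y).hasFDerivAt
      have d2 := (k1.differentiable one_ne_zero y).hasFDerivAt
      have d3 := d1.add ((d1.const_sub 1).mul d2)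
      have e : fderiv ℝ (fun y => η y + (1 - η y) * θ y) y =
          (1 - θ y) • fderiv ℝ η y + (1 - η y) • fderiv ℝ θ y := by
        have := d3.fderiv
        refine this.trans ?_
        ext v
        simp
        ring
      simp only [Pi.add_apply]
      rw [e]
      refine (norm_add_le _ _).trans ?_
      have a := h3 y
      have b := k3 y
      rw [norm_smul, norm_smul, Real.norm_of_nonneg (by linarith), Real.norm_of_nonneg (by linarith)]
      exact add_le_add (mul_le_of_le_one_left (norm_nonneg _) (by linarith))
        (mul_le_of_le_one_left (norm_nonneg _) (by linarith))

lemma exists_cover_of_null {K : Set E3} (h : μH[2] K = 0) {ε : ℝ} (hε : 0 < ε) :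
    ∃ (x : ℕ → E3) (r : ℕ → ℝ), (∀ i, 0 < r i) ∧ K ⊆ ⋃ i, ball (x i) (r i) ∧
      ∀ s : Finset ℕ, ∑ i ∈ s, r i ^ 2 ≤ ε := by
  have hlt : (⨅ (t : ℕ → Set E3) (_ : K ⊆ ⋃ n, t n) (_ : ∀ n, ediam (t n) ≤ 1),
          ∑' n, ⨆ _ : (t n).Nonempty, ediam (t n) ^ (2:ℝ)) < ENNReal.ofReal (ε / 4) := by
    refine lt_of_le_of_lt ?_ (ENNReal.ofReal_pos.2 (by positivity : 0 < ε / 4))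
    rw [← h, Measure.hausdorffMeasure_apply]
    exact le_iSup₂ (f := fun (r : ℝ≥0∞) (_ : 0 < r) =>
      ⨅ (t : ℕ → Set E3) (_ : K ⊆ ⋃ n, t n) (_ : ∀ n, ediam (t n) ≤ r),
          ∑' n, ⨆ _ : (t n).Nonempty, ediam (t n) ^ (2:ℝ)) 1 one_pos
  simp only [iInf_lt_iff] at hlt
  obtain ⟨t, ht1, ht2, ht3⟩ := hlt
  obtain ⟨δ, hδ0, c, hδs, hδc⟩ := posSumOfEncodable (by positivity : 0 < ε / 4) ℕ
  have hfin : ∀ n, ediam (t n) ≠ ∞ := fun n => ((ht2 n).trans_lt ENNReal.one_lt_top).ne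
  have hpt : ∀ n, ∃ x : E3, (t n).Nonempty → x ∈ t n := by
    intro n
    rcases (t n).eq_empty_or_nonempty with h | ⟨x, hx⟩
    · exact ⟨0, fun h' => by simp [h] at h'⟩
    · exact ⟨x, fun _ => hx⟩
  choose x hx using hpt
  refine ⟨x, fun n => diam (t n) + √(δ n), fun n => ?_, ?_, ?_⟩
  · have := Real.sqrt_pos.2 (hδ0 n)
    have := diam_nonneg (s := t n)
    positivity
  · intro y hy
    obtain ⟨n, hn⟩ := mem_iUnion.1 (ht1 hy)
    refine mem_iUnion.2 ⟨n, ?_⟩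
    rw [mem_ball]
    have := dist_le_diam_of_mem' (hfin n) hn (hx n ⟨y, hn⟩)
    have := Real.sqrt_pos.2 (hδ0 n)
    linarith
  · intro s
    have hd : ∀ n, ENNReal.ofReal (diam (t n) ^ 2) ≤ ⨆ _ : (t n).Nonempty, ediam (t n) ^ (2:ℝ) := by
      intro n
      rcases (t n).eq_empty_or_nonempty with h | h
      · simp [h]
      · rw [ciSup_pos h, diam, ENNReal.ofReal_pow ENNReal.toReal_nonneg,
          ENNReal.ofReal_toReal (hfin n)]
        norm_cast
    have h1 : ∑ i ∈ s, diam (t i) ^ 2 ≤ ε / 4 := by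
      rw [← ENNReal.ofReal_le_ofReal_iff (by positivity),
        ENNReal.ofReal_sum_of_nonneg (fun i _ => by positivity)]
      exact (Finset.sum_le_sum fun i _ => hd i).trans ((ENNReal.sum_le_tsum s).trans ht3.le)
    have h2 : ∑ i ∈ s, δ i ≤ ε / 4 :=
      (sum_le_hasSum s (fun i _ => (hδ0 i).le) hδs).trans hδc
    calc ∑ i ∈ s, (diam (t i) + √(δ i)) ^ 2 ≤ ∑ i ∈ s, (2 * diam (t i) ^ 2 + 2 * δ i) := by
          refine Finset.sum_le_sum fun i _ => ?_
          have := Real.sq_sqrt (hδ0 i).le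
          nlinarith [sq_nonneg (diam (t i) - √(δ i))]
      _ = 2 * ∑ i ∈ s, diam (t i) ^ 2 + 2 * ∑ i ∈ s, δ i := by
          rw [Finset.sum_add_distrib, Finset.mul_sum, Finset.mul_sum]
      _ ≤ ε := by linarith

lemma perM_compact_null {E : Set E3} (hE : HasFinPer E) {K : Set E3} (hK : IsCompact K)
    (h : μH[2] K = 0) : perM E hE K = 0 := by
  have : perM E hE K ≤ ENNReal.ofReal 0 := by
    refine perM_le_of_cutoff hE hK fun ε hε => ?_
    have hb := ballVol_pos
    set ε' := min 1 (ε / (32 * ballVol)) with hε'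
    have hpos : 0 < ε' := by positivity
    have hle : 32 * ballVol * ε' ≤ ε := by
      have : ε' ≤ ε / (32 * ballVol) := min_le_right _ _
      rw [le_div_iff₀ (by positivity)] at this
      linarith
    have hle1 : ε' ≤ 1 := min_le_left _ _
    obtain ⟨x, r, hr, hc, hs⟩ := exists_cover_of_null h hpos
    obtain ⟨s, hsub⟩ := hK.elim_finite_subcover (fun i => ball (x i) (r i))
      (fun i => isOpen_ball) hc
    obtain ⟨η, h1, h2, h3, h4, h5, h6⟩ := exists_balls_cutoff x r hr s
    have hr1 : ∀ i, r i ≤ 1 := by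
      intro i
      have := hs {i}
      rw [Finset.sum_singleton] at this
      have hri := hr i
      nlinarith
    refine ⟨η, h1, h2, h3, ⟨⋃ i ∈ s, ball (x i) (r i), ?_, hsub, ?_⟩, ?_, ?_⟩
    · exact isOpen_biUnion fun i _ => isOpen_ball
    · intro y hy
      obtain ⟨i, hi, hyi⟩ := mem_iUnion₂.1 hy
      exact h4 i hi y hyi
    · refine (setIntegral_le_integral (h1.continuous.integrable_of_hasCompactSupport h2)
        (Eventually.of_forall fun y => (h3 y).1)).trans (h5.trans ?_)
      calc ∑ i ∈ s, 8 * ballVol * r i ^ 3 ≤ ∑ i ∈ s, 8 * ballVol * r i ^ 2 := by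
            refine Finset.sum_le_sum fun i _ => ?_
            refine mul_le_mul_of_nonneg_left ?_ (by positivity)
            exact pow_le_pow_of_le_one (hr i).le (hr1 i) (by norm_num)
        _ = 8 * ballVol * ∑ i ∈ s, r i ^ 2 := by rw [Finset.mul_sum]
        _ ≤ 8 * ballVol * ε' := mul_le_mul_of_nonneg_left (hs s) (by positivity)
        _ ≤ ε := by nlinarith
    · rw [zero_add]
      refine (setIntegral_le_integral (integrable_norm_fderiv h1 h2)
        (Eventually.of_forall fun y => norm_nonneg _)).trans (h6.trans ?_)
      rw [← Finset.mul_sum]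
      exact (mul_le_mul_of_nonneg_left (hs s) (by positivity)).trans hle
  simpa using this

lemma perM_null {E : Set E3} (hE : HasFinPer E) {N : Set E3} (h : μH[2] N = 0) :
    perM E hE N = 0 := by
  obtain ⟨N', hN, hm, h0⟩ := exists_measurable_superset_of_null h
  refine measure_mono_null hN ?_
  rw [hm.measure_eq_iSup_isCompact_of_ne_top (measure_ne_top _ _)]
  simp only [ENNReal.iSup_eq_zero]
  intro K hK hKc
  exact perM_compact_null hE hKc (measure_mono_null hK h0)


lemma conv_bound {E : Set E3} (hE : HasFinPer E) (hEm : MeasurableSet E) {g : E3 → ℝ}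
    (hg : ContDiff ℝ 1 g) (hc : HasCompactSupport g) (h1 : ∀ x, ‖g x‖ ≤ 1) (h : E3) :
    |(∫ t in E, g (h - t)) - ∫ t in E, g (0 - t)| ≤ per E * ‖h‖ := by
  let L := ContinuousLinearMap.lsmul ℝ ℝ (E := ℝ)
  let f : E3 → ℝ := E.indicator fun _ => 1
  have hf : LocallyIntegrable f volume :=
    (locallyIntegrable_const (1:ℝ)).indicator hEm
  let F : E3 → ℝ := convolution f g L volume
  have hF : ∀ x, F x = ∫ t in E, g (x - t) := by
    intro x
    rw [← integral_indicator hEm]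
    refine integral_congr_ae (Eventually.of_forall fun t => ?_)
    by_cases ht : t ∈ E <;> simp [f, L, ht]
  have hder : ∀ x, HasFDerivAt F (convolution f (fderiv ℝ g) (L.precompR E3) volume x) x :=
    fun x => hc.hasFDerivAt_convolution_right L hf hg x
  have hval : ∀ x v, convolution f (fderiv ℝ g) (L.precompR E3) volume x v
      = - flux E (fun t => g (x - t) • v) := by
    intro x v
    rw [convolution_precompR_apply L hf (hc.fderiv ℝ) (hg.continuous_fderiv one_ne_zero)]
    rw [flux, ← integral_neg, ← integral_indicator hEm]
    refine integral_congr_ae (Eventually.of_forall fun t => ?_)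
    have hsm : ContDiff ℝ 1 (fun t => g (x - t)) := hg.comp (contDiff_const.sub contDiff_id)
    have : fderiv ℝ (fun t => g (x - t)) t = - fderiv ℝ g (x - t) := by
      have := (hg.differentiable one_ne_zero (x - t)).hasFDerivAt.comp t
        ((hasFDerivAt_id t).const_sub x)
      refine this.fderiv.trans ?_
      ext; simp
    by_cases ht : t ∈ E <;> simp [f, L, ht, divg_smul_const hsm, this]
  have hbd : ∀ x, ‖convolution f (fderiv ℝ g) (L.precompR E3) volume x‖ ≤ per E := by
    intro x
    refine ContinuousLinearMap.opNorm_le_of_unit_norm (per_nonneg hE) fun v hv => ?_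
    rw [hval, norm_neg, Real.norm_eq_abs]
    have ha : Adm univ (fun t => g (x - t) • v) := by
      refine ⟨(hg.comp (contDiff_const.sub contDiff_id)).smul contDiff_const, ?_, subset_univ _, ?_⟩
      · have : HasCompactSupport (fun t => g (x - t)) :=
          hc.comp_homeomorph (Homeomorph.subLeft x)
        exact HasCompactSupport.intro this fun t ht => by
          rw [image_eq_zero_of_notMem_tsupport ht, zero_smul]
      · intro t
        rw [norm_smul, hv, mul_one]; exact h1 _
    refine abs_le.2 ⟨?_, flux_le_per hE ha⟩
    have := flux_le_per hE ha.neg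
    rw [flux_neg] at this
    linarith
  have := convex_univ.norm_image_sub_le_of_norm_hasFDerivWithin_le (f := F)
    (fun x _ => (hder x).hasFDerivWithinAt) (fun x _ => hbd x) (mem_univ 0) (mem_univ h)
  rw [hF, hF, Real.norm_eq_abs] at this
  simpa using this

/-- Translation estimate for sets of finite perimeter. -/
lemma translate_bound {E : Set E3} (hE : HasFinPer E) (hEm : MeasurableSet E) {W : Set E3}
    (hW : MeasurableSet W) (hWf : volume W ≠ ∞) (h : E3) :
    volume {x | x ∈ E ∩ W ∧ x + h ∉ E} ≤ ENNReal.ofReal (per E * ‖h‖) := by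
  set S : Set E3 := {x | x ∈ E ∩ W ∧ x + h ∉ E} with hS
  have hSm : MeasurableSet S := by
    have : S = (E ∩ W) ∩ ((fun x => x + h) ⁻¹' E)ᶜ := rfl
    rw [this]
    exact (hEm.inter hW).inter ((measurable_add_const h) hEm).compl
  have hSf : volume S ≠ ∞ := measure_ne_top_of_subset (fun x hx => hx.1.2) hWf
  rw [hSm.measure_eq_iSup_isCompact_of_ne_top hSf]
  refine iSup_le fun K => iSup_le fun hKS => iSup_le fun hK => ?_
  refine ENNReal.le_of_forall_pos_le_add fun ε hε _ => ?_
  have hKf : volume K ≠ ∞ := hK.measure_ne_top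
  obtain ⟨U, hKU, hU, hUK⟩ := K.exists_isOpen_lt_add hKf (ε := ε) (by simpa using hε.ne')
  obtain ⟨r, hr, hrU⟩ := hK.exists_thickening_subset_open hU hKU
  obtain ⟨g, h1, h2, h3, h4, h5, -⟩ := exists_cutoff _ hK hr
  have hgK : ∀ x ∈ K, g x = 1 := fun x hx => h4 x (self_subset_thickening (by positivity) _ hx)
  have hgU : ∀ x ∉ U, g x = 0 := fun x hx =>
    image_eq_zero_of_notMem_tsupport fun h => hx (hrU (h5 h))
  have hgi : Integrable g := h1.continuous.integrable_of_hasCompactSupport h2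
  have hUf : volume U ≠ ∞ :=
    (hUK.trans (ENNReal.add_lt_top.2 ⟨hKf.lt_top, by simp⟩)).ne
  have key := conv_bound hE hEm (g := fun x => g (-x)) (h1.comp contDiff_neg)
    (h2.comp_homeomorph (Homeomorph.neg E3))
    (fun x => by rw [Real.norm_of_nonneg (h3 _).1]; exact (h3 _).2) h
  have e1 : ∫ t in E, g (-(0 - t)) = ∫ t in E, g t := by simp
  have e2 : ∫ t in E, g (-(h - t)) = ∫ x, E.indicator (fun _ => (1:ℝ)) (x + h) * g x := by
    rw [← integral_indicator hEm, ← integral_add_right_eq_self _ h]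
    refine integral_congr_ae (Eventually.of_forall fun t => ?_)
    by_cases ht : t + h ∈ E <;> simp [ht]
  have l1 : volume.real K ≤ ∫ t in E, g t := by
    calc volume.real K = ∫ t in K, g t := by
          rw [setIntegral_congr_fun hK.measurableSet (g := fun _ => (1:ℝ)) hgK]
          simp
      _ ≤ ∫ t in E, g t := setIntegral_mono_set hgi.integrableOn
          (Eventually.of_forall fun x => (h3 x).1)
          (LE.le.eventuallyLE fun x hx => (hKS hx).1.1)
  have l2 : ∫ x, E.indicator (fun _ => (1:ℝ)) (x + h) * g x ≤ ε := by
    have hm : MeasurableSet (U \ K) := hU.measurableSet.diff hK.measurableSet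
    have hle : ∀ x, E.indicator (fun _ => (1:ℝ)) (x + h) * g x ≤ g x := by
      intro x
      refine mul_le_of_le_one_left (h3 x).1 ?_
      by_cases hx : x + h ∈ E <;> simp [hx]
    have hge : ∀ x, 0 ≤ E.indicator (fun _ => (1:ℝ)) (x + h) * g x := fun x =>
      mul_nonneg (indicator_nonneg (fun _ _ => zero_le_one) _) (h3 x).1
    have := integral_le_of_supp (f := fun x => E.indicator (fun _ => (1:ℝ)) (x + h) * g x)
      (A := U \ K) (c := 1) hm
      (measure_ne_top_of_subset sdiff_subset hUf)
      (by
        refine hgi.mono' ?_ (Eventually.of_forall fun x => ?_)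
        · refine Measurable.aestronglyMeasurable ?_
          exact ((measurable_const.indicator hEm).comp (measurable_add_const h)).mul
            h1.continuous.measurable
        · rw [Real.norm_of_nonneg (hge x)]; exact hle x)
      (by
        intro x hx
        by_cases hxU : x ∈ U
        · have hxK : x ∈ K := by
            by_contra h; exact hx ⟨hxU, h⟩
          have : x + h ∉ E := (hKS hxK).2
          simp [this]
        · simp [hgU x hxU])
      (fun x => (hle x).trans (h3 x).2)
    refine this.trans ?_
    rw [one_mul, measureReal_def, measure_sdiff hKU hK.measurableSet.nullMeasurableSet hKf]
    refine ENNReal.toReal_le_of_le_ofReal ε.2 ?_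
    rw [ENNReal.ofReal_coe_nnreal]
    exact tsub_le_iff_left.2 hUK.le
  rw [e1, e2] at key
  have := (abs_le.1 key).1
  have hfin : volume.real K ≤ per E * ‖h‖ + ε := by linarith
  rw [← ENNReal.ofReal_toReal hKf]
  refine (ENNReal.ofReal_le_ofReal hfin).trans (ENNReal.ofReal_add_le.trans ?_)
  simp


lemma vol_thickening {E : Set E3} (hE : HasFinPer E) (hEm : MeasurableSet E) {K : Set E3}
    (hK : IsCompact K) {τ r : ℝ} (hτ : 0 < τ) (hτ1 : τ ≤ 1) (hr : 0 < r)
    (hd : ∀ x ∈ K, volume (E ∩ ball x (2 * r)) ≤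
      ENNReal.ofReal (τ ^ 3 / 16) * volume (ball x (2 * r))) :
    volume (E ∩ thickening r K) ≤ ENNReal.ofReal (2 * (per E * (τ * r))) := by
  set W := thickening r K with hWdef
  have hW : MeasurableSet W := isOpen_thickening.measurableSet
  have hWf : volume W ≠ ∞ := (hK.isBounded.thickening).measure_lt_top.ne
  set s := τ * r with hs
  have hspos : 0 < s := by positivity
  set b := volume (ball (0 : E3) s) with hb
  have hbpos : b ≠ 0 := (measure_ball_pos _ _ hspos).ne'
  have hbf : b ≠ ∞ := measure_ball_lt_top.ne
  let P : Set (E3 × E3) := {p | p.1 ∈ ball (0 : E3) s ∧ p.2 ∈ E ∩ W ∧ p.2 + p.1 ∉ E}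
  have hP : MeasurableSet P := by
    have h1 : MeasurableSet {p : E3 × E3 | p.1 ∈ ball (0 : E3) s} :=
      measurable_fst measurableSet_ball
    have h2 : MeasurableSet {p : E3 × E3 | p.2 ∈ E ∩ W} := measurable_snd (hEm.inter hW)
    have h3 : MeasurableSet {p : E3 × E3 | p.2 + p.1 ∈ E} :=
      (measurable_snd.add measurable_fst) hEm
    exact h1.inter (h2.inter h3.compl)
  have up : (volume.prod volume) P ≤ ENNReal.ofReal (per E * s) * b := by
    rw [Measure.prod_apply hP]
    calc ∫⁻ h, volume (Prod.mk h ⁻¹' P)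
        ≤ ∫⁻ h, (ball (0 : E3) s).indicator (fun _ => ENNReal.ofReal (per E * s)) h := by
          refine lintegral_mono fun h => ?_
          by_cases hh : h ∈ ball (0 : E3) s
          · rw [indicator_of_mem hh]
            have hsub : Prod.mk h ⁻¹' P ⊆ {x | x ∈ E ∩ W ∧ x + h ∉ E} := fun x hx => hx.2
            refine (measure_mono hsub).trans ((translate_bound hE hEm hW hWf h).trans ?_)
            refine ENNReal.ofReal_le_ofReal (mul_le_mul_of_nonneg_left ?_ (per_nonneg hE))
            exact (mem_ball_zero_iff.1 hh).le
          · have : Prod.mk h ⁻¹' P = ∅ := by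
              ext x; simp only [P, mem_preimage, mem_setOf_eq, mem_empty_iff_false, iff_false]
              exact fun hx => hh hx.1
            simp [this]
      _ = ENNReal.ofReal (per E * s) * b := by
          rw [lintegral_indicator measurableSet_ball, setLIntegral_const]
  have low : volume (E ∩ W) * (b / 2) ≤ (volume.prod volume) P := by
    rw [Measure.prod_apply_symm hP]
    calc volume (E ∩ W) * (b / 2) = ∫⁻ x, (E ∩ W).indicator (fun _ => b / 2) x := by
          rw [lintegral_indicator (hEm.inter hW), setLIntegral_const, mul_comm]
      _ ≤ ∫⁻ x, volume ((fun h => (h, x)) ⁻¹' P) := by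
          refine lintegral_mono fun x => ?_
          by_cases hx : x ∈ E ∩ W
          · rw [indicator_of_mem hx]
            obtain ⟨x0, hx0, hxx0⟩ := mem_thickening_iff.1 hx.2
            have hbx : volume (ball x s) = b := by rw [hb, Measure.addHaar_ball_center]
            have hsr : s ≤ r := by nlinarith
            have i1 : volume (E ∩ ball x s) ≤ b / 2 := by
              have hsub : E ∩ ball x s ⊆ E ∩ ball x0 (2 * r) := by
                refine inter_subset_inter_right _ fun y hy => ?_
                rw [mem_ball] at *
                have := dist_triangle y x x0
                linarith
              refine (measure_mono hsub).trans ((hd x0 hx0).trans (le_of_eq ?_))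
              have h2 : (2 : ℝ≥0∞)⁻¹ = ENNReal.ofReal (1 / 2) := by
                rw [one_div, ENNReal.ofReal_inv_of_pos two_pos]; simp
              rw [ENNReal.div_eq_inv_mul, h2, hb,
                Measure.addHaar_ball_of_pos _ _ (by positivity : 0 < 2 * r),
                Measure.addHaar_ball_of_pos _ _ hspos, ← mul_assoc, ← mul_assoc,
                ← ENNReal.ofReal_mul (by positivity), ← ENNReal.ofReal_mul (by positivity)]
              congr 2
              simp [hs]
              ring
            have i2 : volume ((fun h => (h, x)) ⁻¹' P) = volume (ball x s \ E) := by
              have : (fun h => (h, x)) ⁻¹' P = (fun h => x + h) ⁻¹' (ball x s \ E) := by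
                ext h
                simp only [P, mem_preimage, mem_setOf_eq, Set.mem_diff, mem_ball,
                  dist_self_add_left, dist_zero_right, hx, true_and]
              rw [this, measure_preimage_add]
            rw [i2]
            have i3 : volume (E ∩ ball x s) + volume (ball x s \ E) = b := by
              rw [← hbx, inter_comm]
              exact measure_inter_add_diff _ hEm
            have i4 : b / 2 + b / 2 ≤ b / 2 + volume (ball x s \ E) := by
              rw [ENNReal.add_halves, ← i3]
              exact add_le_add_left (by rw [i3]; exact i1) _
            exact (ENNReal.add_le_add_iff_left (ENNReal.div_ne_top hbf (by simp))).1 i4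
          · simp [hx]
  have h3 := low.trans up
  have h4 : volume (E ∩ W) * (b / 2) * 2 ≤ ENNReal.ofReal (per E * s) * b * 2 := by gcongr
  rw [mul_assoc, ENNReal.div_mul_cancel (by simp) (by simp), mul_right_comm] at h4
  have h5 := (ENNReal.mul_le_mul_iff_left hbpos hbf).1 h4
  refine h5.trans (le_of_eq ?_)
  rw [mul_comm, ENNReal.ofReal_mul (by norm_num : (0:ℝ) ≤ 2)]
  simp

lemma perM_small {E : Set E3} (hE : HasFinPer E) (hEm : MeasurableSet E) {K : Set E3}
    (hK : IsCompact K) {τ r0 : ℝ} (hτ : 0 < τ) (hτ1 : τ ≤ 1) (hr0 : 0 < r0)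
    (hd : ∀ x ∈ K, ∀ r, 0 < r → r < r0 → volume (E ∩ ball x r) ≤
      ENNReal.ofReal (τ ^ 3 / 16) * volume (ball x r)) :
    perM E hE K ≤ ENNReal.ofReal (8 * τ * per E) := by
  have hp := per_nonneg hE
  refine perM_le_of_cutoff hE hK fun ε hε => ?_
  set r := min (r0 / 4) (ε / (2 * (per E + 1))) with hr
  have hrpos : 0 < r := by positivity
  have hr1 : 2 * r < r0 := by
    have : r ≤ r0 / 4 := min_le_left _ _
    linarith
  have hr2 : 2 * (per E + 1) * r ≤ ε := by
    have : r ≤ ε / (2 * (per E + 1)) := min_le_right _ _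
    rw [le_div_iff₀ (by positivity)] at this
    linarith
  have hv := vol_thickening hE hEm hK hτ hτ1 hrpos fun x hx => hd x hx (2 * r) (by positivity) hr1
  have hA : MeasurableSet (E ∩ thickening r K) := hEm.inter isOpen_thickening.measurableSet
  have hAf : volume (E ∩ thickening r K) ≠ ∞ := (hv.trans_lt ENNReal.ofReal_lt_top).ne
  have hvr : volume.real (E ∩ thickening r K) ≤ 2 * (per E * (τ * r)) :=
    ENNReal.toReal_le_of_le_ofReal (by positivity) hv
  obtain ⟨η, h1, h2, h3, h4, h5, h6⟩ := exists_cutoff _ hK hrpos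
  refine ⟨η, h1, h2, h3, ⟨thickening (r / 4) K, isOpen_thickening,
    self_subset_thickening (by positivity) _, h4⟩, ?_, ?_⟩
  · rw [← integral_indicator hEm]
    have := integral_le_of_supp (c := 1) hA hAf
      ((h1.continuous.integrable_of_hasCompactSupport h2).indicator hEm) (fun x hx => by
        by_cases hxE : x ∈ E
        · have : x ∉ tsupport η := fun h => hx ⟨hxE, h5 h⟩
          rw [indicator_of_mem hxE, image_eq_zero_of_notMem_tsupport this]
        · simp [hxE]) (fun x => by
        by_cases hxE : x ∈ E
        · rw [indicator_of_mem hxE]; exact (h3 x).2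
        · simp [hxE])
    refine this.trans ?_
    have h7 : per E * (τ * r) ≤ per E * (1 * r) := by gcongr
    nlinarith
  · rw [← integral_indicator hEm]
    have := integral_le_of_supp (c := 4 / r) hA hAf
      ((integrable_norm_fderiv h1 h2).indicator hEm) (fun x hx => by
        by_cases hxE : x ∈ E
        · have : x ∉ tsupport η := fun h => hx ⟨hxE, h5 h⟩
          rw [indicator_of_mem hxE, fderiv_of_notMem_tsupport ℝ this, norm_zero]
        · simp [hxE]) (fun x => by
        by_cases hxE : x ∈ E
        · rw [indicator_of_mem hxE]; exact h6 x
        · rw [indicator_of_notMem hxE]; positivity)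
    refine this.trans ?_
    have h7 : 4 / r * volume.real (E ∩ thickening r K) ≤ 4 / r * (2 * (per E * (τ * r))) := by
      gcongr
    have h8 : 4 / r * (2 * (per E * (τ * r))) = 8 * τ * per E := by
      field_simp; ring
    linarith

lemma perM_density_zero {E : Set E3} (hE : HasFinPer E) (hEm : MeasurableSet E) :
    perM E hE {x | densityAt E x 0} = 0 := by
  have main : ∀ τ : ℝ, 0 < τ → τ ≤ 1 →
      perM E hE {x | densityAt E x 0} ≤ ENNReal.ofReal (8 * τ * per E) := by
    intro τ hτ hτ1
    let A : ℕ → Set E3 := fun k => {x | ∀ r : ℝ, 0 < r → r < 1 / ((k : ℝ) + 1) →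
      volume (E ∩ ball x r) ≤ ENNReal.ofReal (τ ^ 3 / 128) * volume (ball x r)}
    have hsub : {x | densityAt E x 0} ⊆ ⋃ k, closure (A k) := by
      intro x hx
      have hx' : densityAt E x 0 := hx
      have hev : ∀ᶠ r in 𝓝[>] (0:ℝ),
          volume (E ∩ ball x r) / volume (ball x r) < ENNReal.ofReal (τ ^ 3 / 128) :=
        hx'.eventually_lt_const (ENNReal.ofReal_pos.2 (by positivity))
      obtain ⟨u, hu, hu2⟩ := mem_nhdsGT_iff_exists_Ioo_subset.1 hev
      obtain ⟨k, hk⟩ := exists_nat_one_div_lt (show (0:ℝ) < u from hu)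
      refine mem_iUnion.2 ⟨k, subset_closure fun r hr hrk => ?_⟩
      have : volume (E ∩ ball x r) / volume (ball x r) < ENNReal.ofReal (τ ^ 3 / 128) :=
        hu2 ⟨hr, hrk.trans hk⟩
      exact (ENNReal.div_le_iff (measure_ball_pos _ _ hr).ne' measure_ball_lt_top.ne).1 this.le
    have hmono : Monotone fun k => closure (A k) := by
      intro k l hkl
      refine closure_mono fun x hx r hr hrl => hx r hr (hrl.trans_le ?_)
      exact one_div_le_one_div_of_le (by positivity) (by gcongr)
    refine (measure_mono hsub).trans ?_
    rw [hmono.measure_iUnion]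
    refine iSup_le fun k => ?_
    rw [isClosed_closure.measurableSet.measure_eq_iSup_isCompact_of_ne_top (measure_ne_top _ _)]
    refine iSup_le fun K => iSup_le fun hKA => iSup_le fun hK => ?_
    refine perM_small hE hEm hK hτ hτ1 (r0 := 1 / ((k : ℝ) + 1) / 2) (by positivity) ?_
    intro x hx r hr hrk
    obtain ⟨y, hy, hxy⟩ := Metric.mem_closure_iff.1 (hKA hx) r hr
    have hsub2 : E ∩ ball x r ⊆ E ∩ ball y (2 * r) := by
      refine inter_subset_inter_right _ fun z hz => ?_
      rw [mem_ball] at *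
      have := dist_triangle z x y
      linarith
    refine (measure_mono hsub2).trans ((hy (2 * r) (by positivity) (by linarith)).trans
      (le_of_eq ?_))
    rw [Measure.addHaar_ball_of_pos _ _ (by positivity : 0 < 2 * r),
      Measure.addHaar_ball_of_pos _ _ hr, ← mul_assoc, ← mul_assoc,
      ← ENNReal.ofReal_mul (by positivity), ← ENNReal.ofReal_mul (by positivity)]
    congr 2
    simp
    ring
  have hp := per_nonneg hE
  refine le_antisymm (ENNReal.le_of_forall_pos_le_add fun ε hε _ => ?_) zero_le
  rw [zero_add]
  set τ := min 1 ((ε : ℝ) / (8 * (per E + 1))) with hτ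
  have hε' : (0:ℝ) < ε := hε
  have hτ0 : 0 < τ := by positivity
  have h2 : τ ≤ ε / (8 * (per E + 1)) := min_le_right _ _
  rw [le_div_iff₀ (by positivity)] at h2
  refine (main τ hτ0 (min_le_left _ _)).trans ?_
  rw [← ENNReal.ofReal_coe_nnreal]
  exact ENNReal.ofReal_le_ofReal (by nlinarith)

lemma densityAt_compl {E : Set E3} (hEm : MeasurableSet E) {x : E3} (h : densityAt E x 1) :
    densityAt Eᶜ x 0 := by
  have h1 : Tendsto (fun r : ℝ => 1 - volume (E ∩ ball x r) / volume (ball x r)) (𝓝[>] 0)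
      (𝓝 (1 - 1)) := ENNReal.Tendsto.sub tendsto_const_nhds h (Or.inl ENNReal.one_ne_top)
  rw [tsub_self] at h1
  refine h1.congr' ?_
  filter_upwards [self_mem_nhdsWithin] with r hr
  have hb0 : volume (ball x r) ≠ 0 := (measure_ball_pos _ _ hr).ne'
  have hbf : volume (ball x r) ≠ ∞ := measure_ball_lt_top.ne
  have hs : volume (E ∩ ball x r) + volume (Eᶜ ∩ ball x r) = volume (ball x r) := by
    rw [inter_comm, inter_comm Eᶜ, ← diff_eq]
    exact measure_inter_add_diff _ hEm
  have hf : volume (E ∩ ball x r) / volume (ball x r) ≠ ∞ :=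
    ENNReal.div_ne_top (measure_ne_top_of_subset inter_subset_right hbf) hb0
  refine (ENNReal.eq_sub_of_add_eq hf ?_).symm
  rw [← ENNReal.add_div, add_comm, hs, ENNReal.div_self hb0 hbf]

lemma perM_congr {E F : Set E3} (hE : HasFinPer E) (hF : HasFinPer F)
    (h : ∀ U, V E U = V F U) : perM E hE = perM F hF := by
  have hl : ∀ K, lam E K = lam F K := by
    intro K
    simp only [lam, h]
  have : perContent E hE = perContent F hF := by
    unfold perContent
    congr 1
    ext K
    rw [hl]
  rw [perM, perM, this]

lemma V_compl {E : Set E3} (hEm : MeasurableSet E) (U : Set E3) : V Eᶜ U = V E U := by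
  refine le_antisymm ?_ ?_
  · refine iSup₂_le fun φ hφ => ?_
    rw [flux_compl hφ.smooth hφ.compact hEm, ← flux_neg]
    exact le_V hφ.neg
  · refine iSup₂_le fun φ hφ => ?_
    have := flux_compl hφ.neg.smooth hφ.neg.compact hEm
    rw [flux_neg E, neg_neg] at this
    rw [← this]
    exact le_V hφ.neg

/-- The perimeter measure is concentrated on the essential boundary. -/
lemma perM_essBdry_compl {E : Set E3} (hE : HasFinPer E) (hEm : MeasurableSet E) :
    perM E hE (essBdry E)ᶜ = 0 := by
  have hE' : HasFinPer Eᶜ := by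
    unfold HasFinPer; rw [perCand_compl hEm]; exact hE
  have h1 := perM_density_zero hE hEm
  have h2 := perM_density_zero hE' hEm.compl
  rw [perM_congr hE' hE (V_compl hEm)] at h2
  refine measure_mono_null ?_ (measure_union_null h1 h2)
  intro x hx
  simp only [essBdry, mem_compl_iff, mem_setOf_eq, not_and_or, not_not] at hx
  rcases hx with hx | hx
  · exact Or.inl hx
  · exact Or.inr (densityAt_compl hEm hx)



lemma exists_good_compact {E : Set E3} (hE : HasFinPer E) {A : Set E3} (hA : MeasurableSet A)
    (h0 : perM E hE Aᶜ = 0) {ε : ℝ} (hε : 0 < ε) :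
    ∃ K, K ⊆ A ∧ IsCompact K ∧ ∀ U, IsOpen U → K ⊆ U → ∃ φ, Adm U φ ∧ per E - ε < flux E φ := by
  have hAe : perM E hE A = ENNReal.ofReal (per E) := by
    rw [← perM_univ hE]
    exact measure_of_measure_compl_eq_zero h0
  obtain ⟨K, hKA, hK, hlt⟩ := hA.exists_isCompact_lt_add (μ := perM E hE)
    (measure_ne_top _ _) (ε := ENNReal.ofReal ε) (by simpa using hε)
  refine ⟨K, hKA, hK, fun U hU hKU => ?_⟩
  by_contra! hcon
  have hp : 0 ≤ per E - ε := by
    have := hcon 0 (Adm.zero U)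
    rwa [flux_zero] at this
  have hV : V E U ≤ ENNReal.ofReal (per E - ε) :=
    iSup₂_le fun φ hφ => ENNReal.ofReal_le_ofReal (hcon φ hφ)
  have hKV : perM E hE K ≤ V E U := by
    rw [← perM_open hE hU]; exact measure_mono hKU
  rw [hAe] at hlt
  have h1 : perM E hE K + ENNReal.ofReal ε ≤ ENNReal.ofReal (per E) := by
    refine (add_le_add_left (hKV.trans hV) _).trans (le_of_eq ?_)
    rw [← ENNReal.ofReal_add hp hε.le, sub_add_cancel]
  exact absurd hlt (not_lt.2 h1)

/-- Additivity of the perimeter under removal of a subset with almost disjoint essential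
boundary. -/
lemma per_diff {Λ Ω : Set E3} (hΛm : MeasurableSet Λ) (hΛper : HasFinPer Λ)
    (hΩm : MeasurableSet Ω) (hΩΛ : Ω ⊆ Λ) (hΩper : HasFinPer Ω)
    (hnull : μH[2] (essBdry Ω ∩ essBdry Λ) = 0) : per (Λ \ Ω) = per Λ + per Ω := by
  have hub : ∀ a ∈ perCand (Λ \ Ω), a ≤ per Λ + per Ω := by
    intro a ha
    obtain ⟨φ, hφ, rfl⟩ := mem_perCand.1 ha
    rw [flux_diff hφ.smooth hφ.compact hΩm hΩΛ]
    have h1 := flux_le_per hΛper hφ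
    have h2 := flux_le_per hΩper hφ.neg
    rw [flux_neg] at h2
    linarith
  have hfin : HasFinPer (Λ \ Ω) := ⟨_, hub⟩
  refine le_antisymm (csSup_le ⟨0, mem_perCand.2 ⟨0, Adm.zero _, (flux_zero _).symm⟩⟩ hub) ?_
  have hΩA : perM Ω hΩper (essBdry Λ) = 0 := by
    refine measure_mono_null ?_
      (measure_union_null (perM_null hΩper hnull) (perM_essBdry_compl hΩper hΩm))
    intro x hx
    by_cases h : x ∈ essBdry Ω
    · exact Or.inl ⟨h, hx⟩
    · exact Or.inr h
  obtain ⟨A, hAs, hAm, hA0⟩ := exists_measurable_superset_of_null hΩA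
  have hΛA : perM Λ hΛper Aᶜ = 0 :=
    measure_mono_null (compl_subset_compl.2 hAs) (perM_essBdry_compl hΛper hΛm)
  refine le_of_forall_pos_le_add fun δ hδ => ?_
  have hε : 0 < δ / 4 := by positivity
  obtain ⟨K1, hK1A, hK1, hg1⟩ := exists_good_compact hΛper hAm hΛA hε
  obtain ⟨K2, hK2A, hK2, hg2⟩ := exists_good_compact hΩper hAm.compl (by rwa [compl_compl]) hε
  have hd : Disjoint K1 K2 := disjoint_compl_right.mono hK1A hK2A
  obtain ⟨U1, U2, hU1, hU2, hKU1, hKU2, hU⟩ := SeparatedNhds.of_isCompact_isCompact hK1 hK2 hd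
  obtain ⟨φ, hφ, hφf⟩ := hg1 U1 hU1 hKU1
  obtain ⟨ψ, hψ, hψf⟩ := hg2 U2 hU2 hKU2
  have e1 := flux_le_per hΛper (hφ.add_disjoint hψ hU)
  have e2 := flux_le_per hΩper (hφ.add_disjoint hψ hU)
  have e3 := flux_le_per hfin (hφ.add_disjoint hψ.neg hU)
  rw [flux_add _ hφ.smooth hφ.compact hψ.smooth hψ.compact] at e1 e2
  rw [flux_add _ hφ.smooth hφ.compact hψ.neg.smooth hψ.neg.compact, flux_neg,
    flux_diff hφ.smooth hφ.compact hΩm hΩΛ, flux_diff hψ.smooth hψ.compact hΩm hΩΛ] at e3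
  linarith

/-- **Complement symmetry of the liquid drop energy**: if the essential boundaries of `Ω` and `Λ`
intersect in an `𝓗²`-null set, then `𝓔_Λ[ρ, Λ∖Ω] = Per(Λ) + 𝓔_Λ[1-ρ, Ω]`. -/
theorem ldEnergy_complement (Λ : Set E3) (hΛo : IsOpen Λ) (hΛb : IsBounded Λ)
    (hΛper : HasFinPer Λ) (ρ : ℝ) (hρ0 : 0 ≤ ρ) (hρ1 : ρ ≤ 1)
    (Ω : Set E3) (hΩm : MeasurableSet Ω) (hΩΛ : Ω ⊆ Λ) (hΩper : HasFinPer Ω)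
    (hnull : μH[2] (essBdry Ω ∩ essBdry Λ) = 0) :
    ldEnergy Λ ρ (Λ \ Ω) = per Λ + ldEnergy Λ (1 - ρ) Ω := by
  have hind : ∀ x, Set.indicator (Λ \ Ω) (fun _ => (1:ℝ)) x
      - ρ * Set.indicator Λ (fun _ => (1:ℝ)) x
      = -(Set.indicator Ω (fun _ => (1:ℝ)) x
        - (1 - ρ) * Set.indicator Λ (fun _ => (1:ℝ)) x) := by
    intro x
    by_cases h1 : x ∈ Ω
    · have h2 := hΩΛ h1
      simp [h1, h2]
    · by_cases h2 : x ∈ Λ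
      · simp [h1, h2]
      · simp [h1, h2]
  unfold ldEnergy
  simp only [hind, neg_mul_neg]
  rw [per_diff hΛo.measurableSet hΛper hΩm hΩΛ hΩper hnull]
  ring

end
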